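/- Let B be a self-adjoint bounded operator on a complex Hilbert space H with B ≥ c·1 for some c > 0, let P be a positive trace-class operator, and set z_* := B^{-1/2} (B^{1/2}(P + B)B^{1/2})^{1/2} B^{-1/2} − 1 (a positive trace-class operator). Then Tr[B z_*² (1 + z_*)^{-1}] + Tr[P (1 + z_*)^{-1}] = 2 Tr[B z_*] = 2 Tr[(B^{1/2} P B^{1/2} + B²)^{1/2} − B]. -/

import Mathlib

set_option synthInstance.maxHeartbeats 1000000
set_option maxHeartbeats 1000000

open scoped InnerProductSpace

section TraceSetup

variable (H : Type*) [NormedAddCommGroup H] [InnerProductSpace ℂ H] [CompleteSpace H]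

/-- A fixed Hilbert basis of `H`, used to define the trace. -/
noncomputable def traceBasis : HilbertBasis (exists_hilbertBasis ℂ H).choose ℂ H :=
  (exists_hilbertBasis ℂ H).choose_spec.choose

variable {H}

/-- The diagonal of an operator with respect to the chosen Hilbert basis. -/
noncomputable def opDiag (A : H →L[ℂ] H) (i : (exists_hilbertBasis ℂ H).choose) : ℝ :=
  (⟪traceBasis H i, A (traceBasis H i)⟫_ℂ).re

/-- The trace of an operator: the sum of its diagonal with respect to the chosen Hilbert
basis.  For a trace-class operator this agrees with the usual trace. -/
noncomputable def opTrace (A : H →L[ℂ] H) : ℝ := ∑' i, opDiag A i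

/-- An operator is a positive trace-class operator iff it is positive (for the Loewner order,
i.e. self-adjoint with nonnegative quadratic form) and its diagonal is summable. -/
def IsPosTraceClass (A : H →L[ℂ] H) : Prop := 0 ≤ A ∧ Summable (opDiag A)

/-- `A` is Hilbert–Schmidt iff `A* A` has finite trace. -/
def IsHilbertSchmidt (A : H →L[ℂ] H) : Prop := Summable (opDiag (star A * A))

/-- The Hilbert–Schmidt norm `‖A‖_HS = (Tr[A* A])^{1/2}`. -/
noncomputable def hsNorm (A : H →L[ℂ] H) : ℝ := Real.sqrt (opTrace (star A * A))

end TraceSetup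

/-- The partial minimizer `z_* = B^{-1/2} (B^{1/2}(P + B)B^{1/2})^{1/2} B^{-1/2} − 1`. -/
noncomputable def zStar {H : Type*} [NormedAddCommGroup H] [InnerProductSpace ℂ H]
    [CompleteSpace H] (B P : H →L[ℂ] H) : H →L[ℂ] H :=
  Ring.inverse (CFC.sqrt B) * CFC.sqrt (CFC.sqrt B * (P + B) * CFC.sqrt B)
    * Ring.inverse (CFC.sqrt B) - 1

/-!
Write `X = 1 + z_*` and `T = (B^{1/2} P B^{1/2} + B²)^{1/2} - B`, so that
`z_* = B^{-1/2} T B^{-1/2}`. The operator `X` solves the Riccati equation `X B X = P + B`, hence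
`B z_*² X⁻¹ + P X⁻¹ = B X - 2 B + (B + P) X⁻¹ = B X - 2 B + X B = B z_* + z_* B`; the first
identity is the trace of this one, and the second is `Tr[B B^{-1/2} T B^{-1/2}] = Tr[T]`.

Both need `T` to be trace class. With `Q = B^{1/2} P B^{1/2}`, squaring `B + T` gives
`B T + T B = Q - T² ≤ Q`, so `T ≤ K T K + ε Q` for `K = 1 - ε B`, which has norm `< 1` for small
`ε > 0`. Iterating this inequality bounds the trace of `T` by `ε Tr[Q] / (1 - ‖K‖²)`.
-/

section Algebra

theorem mul_sq_mul_inverse_add_mul_inverse {R : Type*} [Ring R] {b p z : R}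
    (hz : IsUnit (1 + z)) (hRiccati : (1 + z) * b * (1 + z) = p + b) :
    b * z ^ 2 * Ring.inverse (1 + z) + p * Ring.inverse (1 + z) = b * z + z * b := by
  have hp : p = (1 + z) * b * (1 + z) - b := eq_sub_of_add_eq hRiccati.symm
  have hmul : b * z ^ 2 + p = (b * z + z * b) * (1 + z) := by
    rw [hp]
    noncomm_ring
  rw [← add_mul, hmul, Ring.mul_inverse_cancel_right _ _ hz]

variable {A : Type*} [CStarAlgebra A] [PartialOrder A] [StarOrderedRing A]

theorem exists_pos_norm_one_sub_smul_lt_one {b : A} (hb : IsStrictlyPositive b) :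
    ∃ ε : ℝ, 0 < ε ∧ ‖1 - ε • b‖ < 1 := by
  obtain _ | _ := subsingleton_or_nontrivial A
  · exact ⟨1, one_pos, by rw [Subsingleton.elim (1 - (1 : ℝ) • b) 0, norm_zero]; exact one_pos⟩
  obtain ⟨c, hc, hcb⟩ := (CFC.exists_pos_algebraMap_le_iff hb.isSelfAdjoint).mpr
    fun x hx => hb.spectrum_pos hx
  have hε : 0 < (‖b‖ + c)⁻¹ := by positivity
  set ε := (‖b‖ + c)⁻¹
  have hεc : ε * c ≤ 1 := inv_mul_le_one_of_le₀ (by linarith [norm_nonneg b]) (by positivity)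
  have hlower : 0 ≤ 1 - ε • b := by
    have hb_le : b ≤ (‖b‖ + c) • (1 : A) :=
      (hb.isSelfAdjoint.le_algebraMap_norm_self).trans <| by
        rw [Algebra.algebraMap_eq_smul_one]
        exact smul_le_smul_of_nonneg_right (by linarith) zero_le_one
    rw [sub_nonneg, ← inv_smul_smul₀ (by positivity : ‖b‖ + c ≠ 0) (1 : A)]
    exact smul_le_smul_of_nonneg_left hb_le hε.le
  have hupper : 1 - ε • b ≤ algebraMap ℝ A (1 - ε * c) := by
    rw [map_sub, map_one, Algebra.algebraMap_eq_smul_one (ε * c), mul_smul,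
      ← Algebra.algebraMap_eq_smul_one c]
    exact sub_le_sub_left (smul_le_smul_of_nonneg_left hcb hε.le) 1
  refine ⟨ε, hε, ?_⟩
  calc ‖1 - ε • b‖ ≤ 1 - ε * c :=
        (CStarAlgebra.norm_le_iff_le_algebraMap _ (sub_nonneg.mpr hεc) hlower).mpr hupper
    _ < 1 := sub_lt_self 1 (mul_pos hε hc)

theorem ringInverse_sqrt_mul_self_mul_ringInverse_sqrt {b : A} (hb : IsStrictlyPositive b) :
    Ring.inverse (CFC.sqrt b) * b * Ring.inverse (CFC.sqrt b) = 1 := by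
  simpa only [CFC.conjSqrt_apply, CFC.sqrt_ringInverse] using CFC.conjSqrt_ringInverse_self b hb

theorem ringInverse_sqrt_conjugate_sqrt_conjugate {b : A} (hb : IsStrictlyPositive b) (x : A) :
    Ring.inverse (CFC.sqrt b) * (CFC.sqrt b * x * CFC.sqrt b) * Ring.inverse (CFC.sqrt b) = x := by
  simpa only [CFC.conjSqrt_apply, CFC.sqrt_ringInverse] using
    CFC.conjSqrt_ringInverse_conjSqrt b x hb

theorem le_sqrt_add_sq {b q : A} (hb : 0 ≤ b) (hq : 0 ≤ q) : b ≤ CFC.sqrt (q + b ^ 2) :=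
  calc b = CFC.sqrt (b ^ 2) := (CFC.sqrt_sq b hb).symm
    _ ≤ CFC.sqrt (q + b ^ 2) := CFC.sqrt_le_sqrt _ _ (le_add_of_nonneg_left hq)

theorem mul_sqrt_sub_add_sqrt_sub_mul_le {b q : A} (hb : 0 ≤ b) (hq : 0 ≤ q) :
    b * (CFC.sqrt (q + b ^ 2) - b) + (CFC.sqrt (q + b ^ 2) - b) * b ≤ q := by
  set m := CFC.sqrt (q + b ^ 2)
  have hm : m ^ 2 = q + b ^ 2 := CFC.sq_sqrt _ (add_nonneg hq (CStarAlgebra.pow_nonneg hb 2))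
  have hsq : 0 ≤ (m - b) ^ 2 := CStarAlgebra.pow_nonneg (sub_nonneg.mpr (le_sqrt_add_sq hb hq)) 2
  have hq_eq : q = b * (m - b) + (m - b) * b + (m - b) ^ 2 := by
    rw [eq_sub_of_add_eq hm.symm]
    noncomm_ring
  exact hq_eq ▸ le_add_of_nonneg_right hsq

theorem le_star_conjugate_one_sub_smul_add_smul {b t q : A} (hb : IsSelfAdjoint b) (ht : 0 ≤ t)
    (hq : b * t + t * b ≤ q) {ε : ℝ} (hε : 0 ≤ ε) :
    t ≤ star (1 - ε • b) * t * (1 - ε • b) + ε • q := by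
  have hexpand : star (1 - ε • b) * t * (1 - ε • b) + ε • q - t
      = ε • (q - (b * t + t * b)) + ε ^ 2 • (b * t * b) := by
    simp only [star_sub, star_one, star_smul, star_trivial, hb.star_eq, sub_mul, mul_sub, one_mul,
      mul_one, smul_mul_assoc, mul_smul_comm, smul_sub, smul_add, smul_smul, sq]
    abel
  rw [← sub_nonneg, hexpand]
  exact add_nonneg (smul_nonneg hε (sub_nonneg.mpr hq))
    (smul_nonneg (sq_nonneg ε) (hb.conjugate_nonneg ht))

theorem le_star_conjugate_add_smul_one_of_le {a k r t : A} (hle : t ≤ star k * t * k + r) {ρ : ℝ}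
    (hta : t ≤ a + ρ • (1 : A)) (hρ : 0 ≤ ρ) :
    t ≤ star k * a * k + r + (ρ * ‖k‖ ^ 2) • (1 : A) := by
  have hkk : star k * k ≤ ‖k‖ ^ 2 • (1 : A) := by
    rw [← Algebra.algebraMap_eq_smul_one]
    exact CStarAlgebra.star_mul_le_algebraMap_norm_sq
  calc t ≤ star k * t * k + r := hle
    _ ≤ star k * (a + ρ • (1 : A)) * k + r := by
        gcongr
        exact star_left_conjugate_le_conjugate hta k
    _ = star k * a * k + r + ρ • (star k * k) := by
        rw [mul_add, add_mul, mul_smul_comm, mul_one, smul_mul_assoc]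
        abel
    _ ≤ star k * a * k + r + ρ • ‖k‖ ^ 2 • (1 : A) := by gcongr
    _ = star k * a * k + r + (ρ * ‖k‖ ^ 2) • (1 : A) := by rw [smul_smul]

end Algebra

section Parseval

variable {𝕜 E ι : Type*} [RCLike 𝕜] [NormedAddCommGroup E] [InnerProductSpace 𝕜 E]

theorem hasSum_norm_inner_sq (g : HilbertBasis ι 𝕜 E) (x : E) :
    HasSum (fun i => ‖⟪g i, x⟫_𝕜‖ ^ 2) (‖x‖ ^ 2) := by
  have h := RCLike.hasSum_re 𝕜 (g.hasSum_inner_mul_inner x x)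
  simpa only [inner_mul_symm_re_eq_norm, norm_mul, norm_inner_symm x, ← sq,
    inner_self_eq_norm_sq] using h

end Parseval

section Operators

variable {H : Type*} [NormedAddCommGroup H] [InnerProductSpace ℂ H] [CompleteSpace H]

section Diagonal

theorem opDiag_add (A B : H →L[ℂ] H) : opDiag (A + B) = opDiag A + opDiag B := by
  ext i
  simp only [opDiag, add_apply, inner_add_right, Complex.add_re, Pi.add_apply]

theorem opDiag_smul (r : ℝ) (A : H →L[ℂ] H) : opDiag (r • A) = r • opDiag A := by
  ext i
  simp only [opDiag, smul_apply, inner_smul_right_eq_smul, Complex.smul_re,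
    Pi.smul_apply]

theorem opDiag_one : opDiag (1 : H →L[ℂ] H) = 1 := by
  ext i
  simp [opDiag, (traceBasis H).orthonormal.1 i]

theorem opDiag_star_mul_self (A : H →L[ℂ] H) (i) :
    opDiag (star A * A) i = ‖A (traceBasis H i)‖ ^ 2 := by
  rw [opDiag, ContinuousLinearMap.star_eq_adjoint, mul_apply_eq_comp,
    ContinuousLinearMap.adjoint_inner_right]
  exact inner_self_eq_norm_sq (𝕜 := ℂ) _

theorem opDiag_star_mul_self_mul_left_le (X A : H →L[ℂ] H) (i) :
    opDiag (star (X * A) * (X * A)) i ≤ ‖X‖ ^ 2 * opDiag (star A * A) i := by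
  rw [opDiag_star_mul_self, opDiag_star_mul_self, ← mul_pow]
  gcongr
  exact X.le_opNorm _

theorem opDiag_mono : Monotone (opDiag : (H →L[ℂ] H) → _ → ℝ) := by
  intro A B hAB i
  have h := ((ContinuousLinearMap.le_def A B).mp hAB).re_inner_nonneg_right (traceBasis H i)
  simpa [opDiag, inner_sub_right] using h

theorem opDiag_nonneg {A : H →L[ℂ] H} (hA : 0 ≤ A) (i) : 0 ≤ opDiag A i := by
  simpa [opDiag] using opDiag_mono hA i

theorem opTrace_nonneg {A : H →L[ℂ] H} (hA : 0 ≤ A) : 0 ≤ opTrace A :=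
  tsum_nonneg (opDiag_nonneg hA)

theorem opTrace_add {A B : H →L[ℂ] H} (hA : Summable (opDiag A)) (hB : Summable (opDiag B)) :
    opTrace (A + B) = opTrace A + opTrace B := by
  rw [opTrace, opDiag_add]
  exact hA.tsum_add hB

end Diagonal

section HilbertSchmidt

theorem isHilbertSchmidt_iff_summable_matrix {A : H →L[ℂ] H} :
    IsHilbertSchmidt A ↔
      Summable fun p : _ × _ => ‖⟪traceBasis H p.2, A (traceBasis H p.1)⟫_ℂ‖ ^ 2 := by
  have hrow (i) := hasSum_norm_inner_sq (traceBasis H) (A (traceBasis H i))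
  rw [IsHilbertSchmidt, summable_congr (opDiag_star_mul_self A),
    summable_prod_of_nonneg fun _ => sq_nonneg _]
  simp only [(hrow _).tsum_eq, (hrow _).summable, implies_true, true_and]

theorem hasSum_re_inner_mul_inner (A B : H →L[ℂ] H) (i) :
    HasSum (fun j => (⟪traceBasis H i, A (traceBasis H j)⟫_ℂ
      * ⟪traceBasis H j, B (traceBasis H i)⟫_ℂ).re) (opDiag (A * B) i) := by
  have h := (traceBasis H).hasSum_inner_mul_inner (star A (traceBasis H i)) (B (traceBasis H i))
  simp only [ContinuousLinearMap.star_eq_adjoint, ContinuousLinearMap.adjoint_inner_left] at h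
  exact Complex.hasSum_re h

namespace IsHilbertSchmidt

variable {A B : H →L[ℂ] H}

protected theorem star (hA : IsHilbertSchmidt A) : IsHilbertSchmidt (star A) := by
  rw [isHilbertSchmidt_iff_summable_matrix] at hA ⊢
  refine hA.prod_symm.congr fun p => ?_
  rw [ContinuousLinearMap.star_eq_adjoint, ContinuousLinearMap.adjoint_inner_right,
    norm_inner_symm, Prod.fst_swap, Prod.snd_swap]

theorem mul_left (hA : IsHilbertSchmidt A) (X : H →L[ℂ] H) : IsHilbertSchmidt (X * A) :=
  .of_nonneg_of_le (opDiag_nonneg (star_mul_self_nonneg _)) (opDiag_star_mul_self_mul_left_le X A)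
    (Summable.mul_left _ hA)

theorem mul_right (hA : IsHilbertSchmidt A) (X : H →L[ℂ] H) : IsHilbertSchmidt (A * X) := by
  simpa only [star_mul, star_star] using (hA.star.mul_left (star X)).star

theorem summable_re_inner_mul_inner (hA : IsHilbertSchmidt A) (hB : IsHilbertSchmidt B) :
    Summable fun p : _ × _ => (⟪traceBasis H p.1, A (traceBasis H p.2)⟫_ℂ
      * ⟪traceBasis H p.2, B (traceBasis H p.1)⟫_ℂ).re := by
  refine .of_norm_bounded ((isHilbertSchmidt_iff_summable_matrix.mp hA).prod_symm.add
    (isHilbertSchmidt_iff_summable_matrix.mp hB)) fun p => ?_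
  refine (Complex.abs_re_le_norm _).trans ?_
  rw [norm_mul, Prod.fst_swap, Prod.snd_swap]
  nlinarith [sq_nonneg (‖⟪traceBasis H p.1, A (traceBasis H p.2)⟫_ℂ‖
    - ‖⟪traceBasis H p.2, B (traceBasis H p.1)⟫_ℂ‖)]

theorem summable_opDiag_mul (hA : IsHilbertSchmidt A) (hB : IsHilbertSchmidt B) :
    Summable (opDiag (A * B)) :=
  (hA.summable_re_inner_mul_inner hB).prod.congr fun i =>
    (hasSum_re_inner_mul_inner A B i).tsum_eq

theorem opTrace_mul_comm (hA : IsHilbertSchmidt A) (hB : IsHilbertSchmidt B) :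
    opTrace (A * B) = opTrace (B * A) := by
  have hswap := Summable.tsum_comm (f := fun i j => (⟪traceBasis H i, A (traceBasis H j)⟫_ℂ
    * ⟪traceBasis H j, B (traceBasis H i)⟫_ℂ).re) (hA.summable_re_inner_mul_inner hB)
  simp only [opTrace, ← (hasSum_re_inner_mul_inner _ _ _).tsum_eq, ← hswap]
  exact tsum_congr fun _ => tsum_congr fun _ => by rw [mul_comm]

theorem opTrace_star_mul_self_mul_left_le (hA : IsHilbertSchmidt A) (X : H →L[ℂ] H) :
    opTrace (star (X * A) * (X * A)) ≤ ‖X‖ ^ 2 * opTrace (star A * A) := by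
  rw [opTrace, opTrace, ← tsum_mul_left]
  exact (hA.mul_left X).tsum_le_tsum (opDiag_star_mul_self_mul_left_le X A)
    (Summable.mul_left _ hA)

end IsHilbertSchmidt

end HilbertSchmidt

section PosTraceClass

theorem IsHilbertSchmidt.isPosTraceClass_star_mul_self {S : H →L[ℂ] H} (hS : IsHilbertSchmidt S) :
    IsPosTraceClass (star S * S) :=
  ⟨star_mul_self_nonneg S, hS⟩

namespace IsPosTraceClass

variable {P R : H →L[ℂ] H}

theorem nonneg (hP : IsPosTraceClass P) : 0 ≤ P := hP.1

theorem summable_opDiag (hP : IsPosTraceClass P) : Summable (opDiag P) := hP.2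

theorem exists_eq_star_mul_self (hP : IsPosTraceClass P) :
    ∃ S, IsHilbertSchmidt S ∧ P = star S * S := by
  have hsq : P = star (CFC.sqrt P) * CFC.sqrt P := by
    rw [(CFC.sqrt_nonneg P).isSelfAdjoint.star_eq, CFC.sqrt_mul_sqrt_self P hP.nonneg]
  exact ⟨CFC.sqrt P, by rw [IsHilbertSchmidt, ← hsq]; exact hP.summable_opDiag, hsq⟩

protected theorem add (hP : IsPosTraceClass P) (hR : IsPosTraceClass R) :
    IsPosTraceClass (P + R) :=
  ⟨add_nonneg hP.nonneg hR.nonneg, opDiag_add P R ▸ hP.summable_opDiag.add hR.summable_opDiag⟩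

protected theorem smul (hP : IsPosTraceClass P) {r : ℝ} (hr : 0 ≤ r) : IsPosTraceClass (r • P) :=
  ⟨smul_nonneg hr hP.nonneg, opDiag_smul r P ▸ hP.summable_opDiag.const_smul r⟩

theorem star_conjugate (hP : IsPosTraceClass P) (X : H →L[ℂ] H) :
    IsPosTraceClass (star X * P * X) := by
  obtain ⟨S, hS, rfl⟩ := hP.exists_eq_star_mul_self
  simpa only [star_mul, mul_assoc] using (hS.mul_right X).isPosTraceClass_star_mul_self

theorem conjugate (hP : IsPosTraceClass P) {X : H →L[ℂ] H} (hX : IsSelfAdjoint X) :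
    IsPosTraceClass (X * P * X) := by
  simpa only [hX.star_eq] using hP.star_conjugate X

theorem opTrace_star_conjugate_le (hP : IsPosTraceClass P) (X : H →L[ℂ] H) :
    opTrace (star X * P * X) ≤ ‖X‖ ^ 2 * opTrace P := by
  obtain ⟨S, hS, rfl⟩ := hP.exists_eq_star_mul_self
  calc opTrace (star X * (star S * S) * X)
      = opTrace (star (S * X) * (S * X)) := by simp only [star_mul, mul_assoc]
    _ = opTrace (star (star X * star S) * (star X * star S)) := by
        rw [(hS.mul_right X).star.opTrace_mul_comm (hS.mul_right X)]
        simp only [star_mul, star_star]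
    _ ≤ ‖star X‖ ^ 2 * opTrace (star (star S) * star S) :=
        hS.star.opTrace_star_mul_self_mul_left_le (star X)
    _ = ‖X‖ ^ 2 * opTrace (star S * S) := by
        rw [norm_star, star_star, hS.opTrace_mul_comm hS.star]

theorem summable_opDiag_mul_mul (hP : IsPosTraceClass P) (X Y : H →L[ℂ] H) :
    Summable (opDiag (X * P * Y)) := by
  obtain ⟨S, hS, rfl⟩ := hP.exists_eq_star_mul_self
  simpa only [mul_assoc] using (hS.star.mul_left X).summable_opDiag_mul (hS.mul_right Y)

theorem summable_opDiag_mul_left (hP : IsPosTraceClass P) (X : H →L[ℂ] H) :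
    Summable (opDiag (X * P)) := by
  simpa only [mul_one] using hP.summable_opDiag_mul_mul X 1

theorem summable_opDiag_mul_right (hP : IsPosTraceClass P) (Y : H →L[ℂ] H) :
    Summable (opDiag (P * Y)) := by
  simpa only [one_mul] using hP.summable_opDiag_mul_mul 1 Y

theorem opTrace_mul_mul_cycle (hP : IsPosTraceClass P) (X Y : H →L[ℂ] H) :
    opTrace (X * P * Y) = opTrace (Y * X * P) := by
  obtain ⟨S, hS, rfl⟩ := hP.exists_eq_star_mul_self
  calc opTrace (X * (star S * S) * Y)
      = opTrace ((X * star S) * (S * Y)) := by simp only [mul_assoc]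
    _ = opTrace (S * (Y * X * star S)) := by
        rw [(hS.star.mul_left X).opTrace_mul_comm (hS.mul_right Y)]
        simp only [mul_assoc]
    _ = opTrace (Y * X * (star S * S)) := by
        rw [hS.opTrace_mul_comm (hS.star.mul_left _)]
        simp only [mul_assoc]

theorem opTrace_mul_comm (hP : IsPosTraceClass P) (Y : H →L[ℂ] H) :
    opTrace (P * Y) = opTrace (Y * P) := by
  simpa only [one_mul, mul_one] using hP.opTrace_mul_mul_cycle 1 Y

end IsPosTraceClass

end PosTraceClass

section Stein

variable {K R T : H →L[ℂ] H}

-- The bound on `opTrace A` is the fixed point of `a ↦ ‖K‖² a + opTrace R`.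
theorem exists_isPosTraceClass_le_add_smul_one (hT : 0 ≤ T) (hR : IsPosTraceClass R)
    (hK : ‖K‖ < 1) (hle : T ≤ star K * T * K + R) (n : ℕ) :
    ∃ A, IsPosTraceClass A ∧ opTrace A ≤ opTrace R / (1 - ‖K‖ ^ 2) ∧
      T ≤ A + ((‖K‖ ^ 2) ^ n * ‖T‖) • (1 : H →L[ℂ] H) := by
  have hK2 : 0 < 1 - ‖K‖ ^ 2 := sub_pos.mpr (pow_lt_one₀ (norm_nonneg K) hK two_ne_zero)
  induction n with
  | zero =>
    refine ⟨R, hR, le_div_self (opTrace_nonneg hR.nonneg) hK2 (sub_le_self 1 (sq_nonneg _)), ?_⟩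
    have hT_le : T ≤ ‖T‖ • (1 : H →L[ℂ] H) := by
      rw [← Algebra.algebraMap_eq_smul_one]
      exact hT.isSelfAdjoint.le_algebraMap_norm_self
    rw [pow_zero, one_mul]
    exact hT_le.trans (le_add_of_nonneg_left hR.nonneg)
  | succ n ih =>
    obtain ⟨A, hA, hAR, hTA⟩ := ih
    refine ⟨star K * A * K + R, (hA.star_conjugate K).add hR, ?_, ?_⟩
    · calc opTrace (star K * A * K + R)
          = opTrace (star K * A * K) + opTrace R :=
            opTrace_add (hA.star_conjugate K).summable_opDiag hR.summable_opDiag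
        _ ≤ ‖K‖ ^ 2 * (opTrace R / (1 - ‖K‖ ^ 2)) + opTrace R := by
            gcongr
            exact (hA.opTrace_star_conjugate_le K).trans (by gcongr)
        _ = opTrace R / (1 - ‖K‖ ^ 2) := by
            field_simp
            ring
    · rw [pow_succ, mul_right_comm]
      exact le_star_conjugate_add_smul_one_of_le hle hTA (by positivity)

theorem isPosTraceClass_of_le_star_conjugate_add (hT : 0 ≤ T) (hR : IsPosTraceClass R)
    (hK : ‖K‖ < 1) (hle : T ≤ star K * T * K + R) : IsPosTraceClass T := by
  refine ⟨hT, summable_of_sum_le (c := opTrace R / (1 - ‖K‖ ^ 2)) (opDiag_nonneg hT) fun s => ?_⟩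
  have hbound (n : ℕ) : ∑ i ∈ s, opDiag T i ≤
      opTrace R / (1 - ‖K‖ ^ 2) + s.card * ((‖K‖ ^ 2) ^ n * ‖T‖) := by
    obtain ⟨A, hA, hAR, hTA⟩ := exists_isPosTraceClass_le_add_smul_one hT hR hK hle n
    calc ∑ i ∈ s, opDiag T i
        ≤ ∑ i ∈ s, (opDiag A i + (‖K‖ ^ 2) ^ n * ‖T‖) := by
          gcongr with i
          simpa [opDiag_add, opDiag_smul, opDiag_one] using opDiag_mono hTA i
      _ = ∑ i ∈ s, opDiag A i + s.card * ((‖K‖ ^ 2) ^ n * ‖T‖) := by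
          rw [Finset.sum_add_distrib, Finset.sum_const, nsmul_eq_mul]
      _ ≤ opTrace R / (1 - ‖K‖ ^ 2) + s.card * ((‖K‖ ^ 2) ^ n * ‖T‖) := by
          gcongr
          exact (hA.summable_opDiag.sum_le_tsum s fun i _ => opDiag_nonneg hA.nonneg i).trans hAR
  have hpow : Filter.Tendsto (fun n : ℕ => (‖K‖ ^ 2) ^ n) .atTop (nhds 0) :=
    tendsto_pow_atTop_nhds_zero_of_lt_one (sq_nonneg _)
      (pow_lt_one₀ (norm_nonneg K) hK two_ne_zero)
  have hlim := ((hpow.mul_const ‖T‖).const_mul (s.card : ℝ)).const_add (opTrace R / (1 - ‖K‖ ^ 2))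
  rw [zero_mul, mul_zero, add_zero] at hlim
  exact ge_of_tendsto' hlim hbound

theorem isPosTraceClass_of_lyapunov_le {B Q : H →L[ℂ] H} (hB : IsStrictlyPositive B) (hT : 0 ≤ T)
    (hQ : IsPosTraceClass Q) (hle : B * T + T * B ≤ Q) : IsPosTraceClass T := by
  obtain ⟨ε, hε, hnorm⟩ := exists_pos_norm_one_sub_smul_lt_one hB
  exact isPosTraceClass_of_le_star_conjugate_add hT (hQ.smul hε.le) hnorm
    (le_star_conjugate_one_sub_smul_add_smul hB.isSelfAdjoint hT hle hε.le)

theorem IsPosTraceClass.sqrt_add_sq_sub {B Q : H →L[ℂ] H} (hQ : IsPosTraceClass Q)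
    (hB : IsStrictlyPositive B) : IsPosTraceClass (CFC.sqrt (Q + B ^ 2) - B) :=
  isPosTraceClass_of_lyapunov_le hB (sub_nonneg.mpr (le_sqrt_add_sq hB.nonneg hQ.nonneg)) hQ
    (mul_sqrt_sub_add_sqrt_sub_mul_le hB.nonneg hQ.nonneg)

end Stein

section ZStar

variable {B P : H →L[ℂ] H}

theorem zStar_eq_conjugate (hB : IsStrictlyPositive B) :
    zStar B P = Ring.inverse (CFC.sqrt B)
      * (CFC.sqrt (CFC.sqrt B * P * CFC.sqrt B + B ^ 2) - B) * Ring.inverse (CFC.sqrt B) := by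
  have hsq : CFC.sqrt B * B * CFC.sqrt B = B ^ 2 :=
    calc CFC.sqrt B * B * CFC.sqrt B
        = CFC.sqrt B * (CFC.sqrt B ^ 2) * CFC.sqrt B := by rw [CFC.sq_sqrt B hB.nonneg]
      _ = (CFC.sqrt B ^ 2) ^ 2 := by noncomm_ring
      _ = B ^ 2 := by rw [CFC.sq_sqrt B hB.nonneg]
  rw [zStar, mul_sub, sub_mul, mul_add, add_mul, hsq,
    ringInverse_sqrt_mul_self_mul_ringInverse_sqrt hB]

theorem one_add_zStar_mul_mul_one_add_zStar (hB : IsStrictlyPositive B) (hP : 0 ≤ P) :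
    (1 + zStar B P) * B * (1 + zStar B P) = P + B := by
  have hMM : CFC.sqrt (CFC.sqrt B * (P + B) * CFC.sqrt B) ^ 2
      = CFC.sqrt B * (P + B) * CFC.sqrt B :=
    CFC.sq_sqrt _ (conjugate_nonneg_of_nonneg (add_nonneg hP hB.nonneg) (CFC.sqrt_nonneg B))
  have hw := ringInverse_sqrt_mul_self_mul_ringInverse_sqrt hB
  have hconj := ringInverse_sqrt_conjugate_sqrt_conjugate hB (P + B)
  rw [zStar, add_sub_cancel]
  set w := Ring.inverse (CFC.sqrt B)
  set M := CFC.sqrt (CFC.sqrt B * (P + B) * CFC.sqrt B)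
  calc w * M * w * B * (w * M * w)
      = w * M * (w * B * w) * M * w := by noncomm_ring
    _ = w * M ^ 2 * w := by rw [hw, mul_one, mul_assoc w M M, sq]
    _ = P + B := by rw [hMM, hconj]

theorem isPosTraceClass_zStar (hB : IsStrictlyPositive B) (hP : IsPosTraceClass P) :
    IsPosTraceClass (zStar B P) := by
  rw [zStar_eq_conjugate hB]
  exact ((hP.conjugate (CFC.sqrt_nonneg B).isSelfAdjoint).sqrt_add_sq_sub hB).conjugate
    (CFC.sqrt_nonneg B).isSelfAdjoint.ringInverse

theorem opTrace_mul_zStar (hB : IsStrictlyPositive B) (hP : IsPosTraceClass P) :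
    opTrace (B * zStar B P)
      = opTrace (CFC.sqrt (CFC.sqrt B * P * CFC.sqrt B + B ^ 2) - B) := by
  have hT := (hP.conjugate (CFC.sqrt_nonneg B).isSelfAdjoint).sqrt_add_sq_sub hB
  set T := CFC.sqrt (CFC.sqrt B * P * CFC.sqrt B + B ^ 2) - B
  calc opTrace (B * zStar B P)
      = opTrace (B * Ring.inverse (CFC.sqrt B) * T * Ring.inverse (CFC.sqrt B)) := by
        rw [zStar_eq_conjugate hB, ← mul_assoc, ← mul_assoc]
    _ = opTrace (Ring.inverse (CFC.sqrt B) * (B * Ring.inverse (CFC.sqrt B)) * T) :=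
        hT.opTrace_mul_mul_cycle _ _
    _ = opTrace T := by
        rw [← mul_assoc, ringInverse_sqrt_mul_self_mul_ringInverse_sqrt hB, one_mul]

end ZStar

end Operators

/-- For `B ≥ c·1` self-adjoint (`c > 0`) and `P` positive trace class,
`Tr[B z_*²(1+z_*)⁻¹] + Tr[P(1+z_*)⁻¹] = 2 Tr[B z_*] = 2 Tr[(B^{1/2} P B^{1/2} + B²)^{1/2} − B]`. -/
theorem zStar_energy_value {H : Type*} [NormedAddCommGroup H] [InnerProductSpace ℂ H]
    [CompleteSpace H] (B P : H →L[ℂ] H) (c : ℝ) (hc : 0 < c) (hBsa : IsSelfAdjoint B)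
    (hB : c • (1 : H →L[ℂ] H) ≤ B) (hP : IsPosTraceClass P) :
    opTrace (B * zStar B P ^ 2 * Ring.inverse (1 + zStar B P))
        + opTrace (P * Ring.inverse (1 + zStar B P))
      = 2 * opTrace (B * zStar B P) ∧
    2 * opTrace (B * zStar B P)
      = 2 * opTrace (CFC.sqrt (CFC.sqrt B * P * CFC.sqrt B + B ^ 2) - B) := by
  have hBpos : IsStrictlyPositive B := (isStrictlyPositive_one.smul hc).of_le hB
  have hz : IsPosTraceClass (zStar B P) := isPosTraceClass_zStar hBpos hP
  have hunit : IsUnit (1 + zStar B P) := (isStrictlyPositive_one.add_nonneg hz.nonneg).isUnit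
  have henergy : B * zStar B P ^ 2 * Ring.inverse (1 + zStar B P)
      + P * Ring.inverse (1 + zStar B P) = B * zStar B P + zStar B P * B :=
    mul_sq_mul_inverse_add_mul_inverse hunit (one_add_zStar_mul_mul_one_add_zStar hBpos hP.nonneg)
  refine ⟨?_, by rw [opTrace_mul_zStar hBpos hP]⟩
  calc opTrace (B * zStar B P ^ 2 * Ring.inverse (1 + zStar B P))
        + opTrace (P * Ring.inverse (1 + zStar B P))
      = opTrace (B * zStar B P + zStar B P * B) := by
        rw [← henergy, opTrace_add _ (hP.summable_opDiag_mul_right _)]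
        simpa only [pow_two, mul_assoc] using
          hz.summable_opDiag_mul_mul B (zStar B P * Ring.inverse (1 + zStar B P))
    _ = opTrace (B * zStar B P) + opTrace (zStar B P * B) :=
        opTrace_add (hz.summable_opDiag_mul_left B) (hz.summable_opDiag_mul_right B)
    _ = 2 * opTrace (B * zStar B P) := by rw [hz.opTrace_mul_comm B, two_mul]
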